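/- Fix β > 0, B > 0, N₀ > 0, L > 0, k > 0, c > 0, λ̄ ∈ ℝ, and set c₀ = β·N₀/(B·L). Define C, f : (0,∞) → ℝ by C(V) = β·((V·B/β)·exp(−c₀/V) − (N₀/L)·E₁(c₀/V)) + (k²/(4·c·β))·V² and f(V) = B·E₁(c₀/V) + (k²/(2·c·β))·V − λ̄. Suppose V_s > 0 satisfies f(V_s) = 0. Then (C(V) − C(V_s))/f(V) → V_s as V → V_s within (0,∞)\{V_s}. -/

import Mathlib

open MeasureTheory

noncomputable def E1 (y : ℝ) : ℝ := ∫ t in Set.Ioi y, Real.exp (-t) / t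

/-!
The cost and the rate difference are tied together by `C' (V) = V * f' (V)`. For the `E₁` terms this
holds because `V * exp (-c₀ / V) - c₀ * E₁ (c₀ / V)` has derivative `exp (-c₀ / V)`, which is `V`
times the derivative of `E₁ (c₀ / V)`. As `f (V_s) = 0` and `f' (V_s) > 0`, the ratio is that of the
difference quotients of `C` and `f` at `V_s`, so it tends to `C' (V_s) / f' (V_s) = V_s`.
-/

open Filter Set
open scoped Topology

lemma tendsto_sub_div_sub_of_hasDerivWithinAt {𝕜 : Type*} [NontriviallyNormedField 𝕜]
    {f g : 𝕜 → 𝕜} {f' g' a : 𝕜} {s : Set 𝕜} (hf : HasDerivWithinAt f f' s a)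
    (hg : HasDerivWithinAt g g' s a) (hg' : g' ≠ 0) :
    Tendsto (fun x => (f x - f a) / (g x - g a)) (𝓝[s \ {a}] a) (𝓝 (f' / g')) := by
  refine ((hasDerivWithinAt_iff_tendsto_slope.1 hf).div
    (hasDerivWithinAt_iff_tendsto_slope.1 hg) hg').congr' ?_
  filter_upwards [self_mem_nhdsWithin] with x hx
  simp only [Pi.div_apply, slope_def_field]
  exact div_div_div_cancel_right₀ (sub_ne_zero.2 hx.2) _ _

lemma hasDerivAt_integral_Ioi {E : Type*} [NormedAddCommGroup E] [NormedSpace ℝ E]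
    [CompleteSpace E] {F : ℝ → E} {a y : ℝ} (hF : IntegrableOn F (Ioi a)) (hay : a < y)
    (hcont : ContinuousAt F y) : HasDerivAt (fun u => ∫ t in Ioi u, F t) (-F y) y := by
  have hint {u : ℝ} (hu : a < u) : IntegrableOn F (Ioi u) := hF.mono_set (Ioi_subset_Ioi hu.le)
  have hderiv : HasDerivAt (fun u => ∫ t in a..u, F t) (F y) y :=
    intervalIntegral.integral_hasDerivAt_right
      ((intervalIntegrable_iff_integrableOn_Ioc_of_le hay.le).2
        (hF.mono_set Ioc_subset_Ioi_self))
      ⟨Ioi a, Ioi_mem_nhds hay, hF.aestronglyMeasurable⟩ hcont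
  refine (hderiv.const_sub (∫ t in Ioi a, F t)).congr_of_eventuallyEq ?_
  filter_upwards [Ioi_mem_nhds hay] with u hu
  rw [← intervalIntegral.integral_Ioi_sub_Ioi' hF (hint hu), sub_sub_cancel]

lemma integrableOn_exp_neg_div_Ioi {a : ℝ} (ha : 0 < a) :
    IntegrableOn (fun t : ℝ => Real.exp (-t) / t) (Ioi a) := by
  refine ((integrableOn_exp_neg_Ioi a).div_const a).mono'
    (by fun_prop : Measurable fun t : ℝ => Real.exp (-t) / t).aestronglyMeasurable ?_
  filter_upwards [ae_restrict_mem measurableSet_Ioi] with t (hat : a < t)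
  have ht : 0 < t := ha.trans hat
  rw [Real.norm_of_nonneg (by positivity)]
  gcongr

lemma hasDerivAt_E1 {y : ℝ} (hy : 0 < y) : HasDerivAt E1 (-(Real.exp (-y) / y)) y :=
  hasDerivAt_integral_Ioi (integrableOn_exp_neg_div_Ioi (half_pos hy)) (half_lt_self hy)
    (by fun_prop (disch := exact hy.ne'))

lemma hasDerivAt_const_div {𝕜 : Type*} [NontriviallyNormedField 𝕜] (a : 𝕜) {x : 𝕜} (hx : x ≠ 0) :
    HasDerivAt (fun x => a / x) (-(a / x ^ 2)) x := by
  simpa [div_eq_mul_inv] using (hasDerivAt_inv hx).const_mul a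

/-- The rate difference `f` of the local queue, in terms of `κ = k² / (2 c β)`. -/
noncomputable def rateDiff (B κ c₀ lam V : ℝ) : ℝ := B * E1 (c₀ / V) + κ * V - lam

/-- The derivative `f'` of `rateDiff` in `V`, for positive `c₀` and `V`. -/
noncomputable def rateSlope (B κ c₀ V : ℝ) : ℝ := B * (Real.exp (-(c₀ / V)) / V) + κ

/-- The average cost `C`, in terms of `κ = k² / (2 c β)` and with the coefficient `β N₀ / L` of the
exponential integral written as `B c₀`. -/
noncomputable def avgCost (B κ c₀ V : ℝ) : ℝ :=
  B * (V * Real.exp (-(c₀ / V)) - c₀ * E1 (c₀ / V)) + κ / 2 * V ^ 2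

section

variable {B κ c₀ V : ℝ}

lemma rateSlope_pos (hB : 0 < B) (hκ : 0 ≤ κ) (hV : 0 < V) : 0 < rateSlope B κ c₀ V := by
  unfold rateSlope
  positivity

lemma hasDerivAt_E1_const_div (hc₀ : 0 < c₀) (hV : 0 < V) :
    HasDerivAt (fun V => E1 (c₀ / V)) (Real.exp (-(c₀ / V)) / V) V := by
  refine ((hasDerivAt_E1 (div_pos hc₀ hV)).comp V
    (hasDerivAt_const_div c₀ hV.ne')).congr_deriv ?_
  field_simp

lemma hasDerivAt_mul_exp_neg_div_sub_mul_E1 (hc₀ : 0 < c₀) (hV : 0 < V) :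
    HasDerivAt (fun V => V * Real.exp (-(c₀ / V)) - c₀ * E1 (c₀ / V))
      (Real.exp (-(c₀ / V))) V := by
  have hexp := (hasDerivAt_const_div c₀ hV.ne').fun_neg.exp
  refine (((hasDerivAt_id' V).fun_mul hexp).fun_sub
    ((hasDerivAt_E1_const_div hc₀ hV).const_mul c₀)).congr_deriv ?_
  field_simp
  ring

lemma hasDerivAt_rateDiff (lam : ℝ) (hc₀ : 0 < c₀) (hV : 0 < V) :
    HasDerivAt (rateDiff B κ c₀ lam) (rateSlope B κ c₀ V) V := by
  refine ((((hasDerivAt_E1_const_div hc₀ hV).const_mul B).fun_add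
    ((hasDerivAt_id' V).const_mul κ)).sub_const lam).congr_deriv ?_
  rw [rateSlope, mul_one]

lemma hasDerivAt_avgCost (hc₀ : 0 < c₀) (hV : 0 < V) :
    HasDerivAt (avgCost B κ c₀) (V * rateSlope B κ c₀ V) V := by
  refine (((hasDerivAt_mul_exp_neg_div_sub_mul_E1 hc₀ hV).const_mul B).fun_add
    ((hasDerivAt_pow 2 V).const_mul (κ / 2))).congr_deriv ?_
  rw [rateSlope]
  field_simp
  ring

lemma tendsto_avgCost_sub_div_rateDiff_sub (lam : ℝ) (s : Set ℝ) (hB : 0 < B) (hκ : 0 ≤ κ)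
    (hc₀ : 0 < c₀) (hV : 0 < V) :
    Tendsto (fun U => (avgCost B κ c₀ U - avgCost B κ c₀ V) /
      (rateDiff B κ c₀ lam U - rateDiff B κ c₀ lam V)) (𝓝[s \ {V}] V) (𝓝 V) := by
  have hslope : rateSlope B κ c₀ V ≠ 0 := (rateSlope_pos hB hκ hV).ne'
  simpa only [mul_div_cancel_right₀ V hslope] using
    tendsto_sub_div_sub_of_hasDerivWithinAt (s := s)
      (hasDerivAt_avgCost (B := B) (κ := κ) hc₀ hV).hasDerivWithinAt
      (hasDerivAt_rateDiff lam hc₀ hV).hasDerivWithinAt hslope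

end

theorem stmt_13 (β B N₀ L k c lam : ℝ) (hβ : 0 < β) (hB : 0 < B) (hN : 0 < N₀) (hL : 0 < L)
    (hk : 0 < k) (hc : 0 < c)
    (c₀ : ℝ) (hc₀ : c₀ = β * N₀ / (B * L))
    (C f : ℝ → ℝ)
    (hC : ∀ V, C V = β * ((V * B / β) * Real.exp (-(c₀ / V)) - (N₀ / L) * E1 (c₀ / V))
        + (k ^ 2 / (4 * c * β)) * V ^ 2)
    (hf : ∀ V, f V = B * E1 (c₀ / V) + (k ^ 2 / (2 * c * β)) * V - lam)
    (Vs : ℝ) (hVs : 0 < Vs) (hfVs : f Vs = 0) :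
    Filter.Tendsto (fun V => (C V - C Vs) / f V)
      (nhdsWithin Vs (Set.Ioi 0 \ {Vs})) (nhds Vs) := by
  have hc₀_pos : 0 < c₀ := hc₀ ▸ by positivity
  set κ := k ^ 2 / (2 * c * β) with hκ
  have hf_eq : f = rateDiff B κ c₀ lam := funext hf
  have hC_eq : C = avgCost B κ c₀ := by
    have hN₀ : β * (N₀ / L) = B * c₀ := by rw [hc₀]; field_simp
    funext V
    rw [hC, avgCost, mul_sub β, ← mul_assoc β (N₀ / L), hN₀, hκ]
    field_simp
    ring
  simpa only [← hf_eq, ← hC_eq, hfVs, sub_zero] using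
    tendsto_avgCost_sub_div_rateDiff_sub lam (Ioi 0) hB (by positivity : 0 ≤ κ) hc₀_pos hVs
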